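/- Let F be a free group of finite rank n ≥ 2 and let h₁, …, h_k be finitely many nontrivial elements of F. Then there exists a subgroup J of F such that: (i) J is free of rank 2, i.e. there is an injective group homomorphism from the free group on two generators onto J; (ii) J is malnormal in F; and (iii) for every i ∈ {1, …, k} and every g ∈ F, the intersection g J g⁻¹ ∩ ⟨h_i⟩ is trivial, where ⟨h_i⟩ is the cyclic subgroup generated by h_i. -/

import Mathlib

/-- The conjugate subgroup `g H g⁻¹`. -/
def conjSubgroup {G : Type*} [Group G] (g : G) (H : Subgroup G) : Subgroup G :=
  H.map (MulAut.conj g).toMonoidHom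

/-- A subgroup `H` of `G` is malnormal if `g H g⁻¹ ∩ H ≠ {1}` implies `g ∈ H`. -/
def IsMalnormal {G : Type*} [Group G] (H : Subgroup G) : Prop :=
  ∀ g : G, conjSubgroup g H ⊓ H ≠ ⊥ → g ∈ H

/-!
Let `J` be generated by the words `xᴺ y xᴺ`, where `x` runs over some of the free generators and
`y ≠ x` is a generator chosen for each `x`. Reduced words in these blocks are reduced, so the
blocks freely generate `J`. If `g u g⁻¹ = rʲ` with `u` a nontrivial cyclically reduced word in the
blocks and `r` cyclically reduced, then comparing reduced words of `g uᵐ g⁻¹ = rʲᵐ` for large `m`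
shows that `g u` or `g u⁻¹` is a prefix of a power of `r` or of `r⁻¹`; in particular a block occurs
there right after `g`. If `|r| ≤ N` this is impossible, because a block has no period in `[1, N]`.
If `r` is itself a word in the blocks, then the isolated letter `y` forces the occurrence to be
aligned with the blocks of `r`, so `g` is a word in the blocks as well.
-/

open FreeGroup hiding map_mul map_inv

theorem conjSubgroup_range_inf_eq_bot_iff {A G : Type*} [Group A] [Group G] {φ : A →* G} {g : G}
    {H : Subgroup G} :
    conjSubgroup g φ.range ⊓ H = ⊥ ↔ ∀ a, g * φ a * g⁻¹ ∈ H → φ a = 1 := by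
  simp [Subgroup.eq_bot_iff_forall, conjSubgroup]

section ReducedWords

variable {α : Type*} {p r u v w : List (α × Bool)}

theorem isReduced_invRev (h : IsReduced w) : IsReduced (invRev w) := by
  classical
  rw [isReduced_iff_reduce_eq, reduce_invRev, h.reduce_eq]

theorem eq_of_isReduced_of_mk_eq (hv : IsReduced v) (hw : IsReduced w) (h : mk v = mk w) :
    v = w := by
  classical
  rw [← hv.reduce_eq, reduce.sound h, hw.reduce_eq]

theorem isCyclicallyReduced_iff_isReduced_append_self :
    IsCyclicallyReduced w ↔ IsReduced (w ++ w) := by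
  simp only [IsCyclicallyReduced, FreeGroup.IsReduced, List.isChain_append, and_self_left]

theorem isCyclicallyReduced_invRev (h : IsCyclicallyReduced w) :
    IsCyclicallyReduced (invRev w) := by
  rw [isCyclicallyReduced_iff_isReduced_append_self] at h ⊢
  simpa only [invRev_append] using isReduced_invRev h

theorem exists_isCyclicallyReduced_conj [DecidableEq α] (x : FreeGroup α) :
    ∃ (y : FreeGroup α) (w : List (α × Bool)),
      IsCyclicallyReduced w ∧ w.length ≤ x.norm ∧ x = y * mk w * y⁻¹ := by
  have hx := reduceCyclically.conj_conjugator_reduceCyclically x.toWord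
  refine ⟨mk (reduceCyclically.conjugator x.toWord), reduceCyclically x.toWord,
    reduceCyclically.isCyclicallyReduced isReduced_toWord, ?_, ?_⟩
  · have := congrArg List.length hx
    simp only [List.length_append] at this
    rw [FreeGroup.norm]
    omega
  · rw [inv_mk, mul_mk, mul_mk, hx, mk_toWord]

theorem isReduced_append_or_append_invRev (hu : IsReduced u) (hp : IsCyclicallyReduced p) :
    IsReduced (u ++ p) ∨ IsReduced (u ++ invRev p) := by
  by_contra! ⟨hup, hup'⟩
  simp only [FreeGroup.IsReduced, List.isChain_append, not_and, not_forall] at hup hup'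
  obtain ⟨x, hx, y, hy, hxy, hne⟩ := hup hu hp.isReduced
  obtain ⟨x', hx', y', hy', hxy', hne'⟩ := hup' hu (isReduced_invRev hp.isReduced)
  obtain ⟨z, hz, rfl⟩ : ∃ z ∈ p.getLast?, (z.1, !z.2) = y' := by
    simpa only [invRev, List.head?_reverse, List.getLast?_map, Option.mem_def,
      Option.map_eq_some_iff] using hy'
  obtain rfl : x = x' := Option.mem_unique hx hx'
  have hzx : z.2 = x.2 := by simpa using Ne.symm hne'
  exact hne (hzx ▸ hp.2 z hz y hy (hxy'.symm.trans hxy))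

theorem prefix_of_mk_append_append_eq (huv : IsReduced (u ++ v)) (hlen : w.length ≤ v.length)
    (hr : IsReduced r) (h : mk (u ++ v ++ w) = mk r) : u <+: r := by
  induction w generalizing v with
  | nil =>
    rw [List.append_nil] at h
    exact ⟨v, eq_of_isReduced_of_mk_eq huv hr h⟩
  | cons a w ih =>
    obtain ⟨v, b, rfl⟩ := (List.eq_nil_or_concat' v).resolve_left (by rintro rfl; simp at hlen)
    have hlen' : w.length ≤ v.length := by simpa using hlen
    by_cases hab : b.1 = a.1 → b.2 = a.2
    · refine ih (v := v ++ [b, a]) ?_ (by simp; lia) (by simpa using h)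
      simpa using IsReduced.append_overlap (L₁ := u ++ v) (L₂ := [b]) (L₃ := [a])
        (by simpa using huv) (by simpa using hab) (List.cons_ne_nil _ _)
    · have hb : b = (a.1, !a.2) := by
        push Not at hab
        exact Prod.ext hab.1 (Bool.eq_not_of_ne hab.2)
      refine ih (huv.infix ⟨[], [b], by simp⟩) hlen' (Eq.trans ?_ h)
      have hcancel : mk (u ++ v ++ (a.1, !a.2) :: (a.1, a.2) :: w) = mk (u ++ v ++ w) :=
        Quot.sound Red.Step.not_rev
      simpa [hb] using hcancel.symm

theorem append_prefix_flatten_replicate_of_conj_eq_pow (hp : IsCyclicallyReduced p) (hp0 : p ≠ [])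
    (hr : IsCyclicallyReduced r) (hup : IsReduced (u ++ p)) {j : ℕ}
    (h : mk u * mk p * (mk u)⁻¹ = mk r ^ j) :
    ∃ K, u ++ p <+: (List.replicate K r).flatten := by
  have hpow : mk (u ++ (List.replicate (u.length + 1) p).flatten ++ invRev u) =
      mk (List.replicate (j * (u.length + 1)) r).flatten := by
    rw [← mul_mk, ← mul_mk, ← pow_mk, ← pow_mk, ← inv_mk, ← conj_pow, h, pow_mul]
  have hred : IsReduced (u ++ (List.replicate (u.length + 1) p).flatten) := by
    simpa only [List.append_nil] using
      IsReduced.append_flatten_replicate_append (L₃ := []) hp (by simpa using hup)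
        (Nat.succ_ne_zero u.length)
  rw [List.replicate_succ, List.flatten_cons, ← List.append_assoc] at hpow hred
  refine ⟨_, prefix_of_mk_append_append_eq hred ?_ (hr.flatten_replicate _).isReduced hpow⟩
  simpa using Nat.le_mul_of_pos_right _ (List.length_pos_iff.2 hp0)

theorem exists_append_prefix_flatten_replicate_of_conj_eq_zpow (hu : IsReduced u)
    (hp : IsCyclicallyReduced p) (hp0 : p ≠ []) (hr : IsCyclicallyReduced r) {j : ℤ}
    (h : mk u * mk p * (mk u)⁻¹ = mk r ^ j) :
    ∃ p' ∈ ({p, invRev p} : Set (List (α × Bool))),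
      ∃ r' ∈ ({r, invRev r} : Set (List (α × Bool))),
        ∃ K, u ++ p' <+: (List.replicate K r').flatten := by
  obtain ⟨r', hr', hr'c, k, hk⟩ : ∃ r' ∈ ({r, invRev r} : Set (List (α × Bool))),
      IsCyclicallyReduced r' ∧ ∃ k : ℕ, mk r ^ j = mk r' ^ k := by
    obtain ⟨k, rfl | rfl⟩ := j.eq_nat_or_neg
    · exact ⟨r, .inl rfl, hr, k, zpow_natCast _ _⟩
    · exact ⟨invRev r, .inr rfl, isCyclicallyReduced_invRev hr, k, by
        rw [← inv_mk, zpow_neg, zpow_natCast, inv_pow]⟩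
  rw [hk] at h
  obtain hup | hup := isReduced_append_or_append_invRev hu hp
  · exact ⟨p, .inl rfl, r', hr',
      append_prefix_flatten_replicate_of_conj_eq_pow hp hp0 hr'c hup h⟩
  · have hr'' : invRev r' ∈ ({r, invRev r} : Set (List (α × Bool))) := by
      obtain rfl | rfl := hr'
      exacts [.inr rfl, .inl invRev_invRev]
    have h' : mk u * mk (invRev p) * (mk u)⁻¹ = mk (invRev r') ^ k := by
      rw [← inv_mk, ← inv_mk, inv_pow, ← h, conj_inv]
    have hp0' : invRev p ≠ [] := by rwa [Ne, ← invRev_empty, invRev_injective.eq_iff]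
    exact ⟨invRev p, .inr rfl, invRev r', hr'', append_prefix_flatten_replicate_of_conj_eq_pow
      (isCyclicallyReduced_invRev hp) hp0' (isCyclicallyReduced_invRev hr'c) hup h'⟩

end ReducedWords

theorem hasPeriod_flatten_replicate {γ : Type*} (r : List γ) (K : ℕ) :
    (List.replicate K r).flatten.HasPeriod r.length := by
  cases K with
  | zero => simp
  | succ K =>
    have htake : (List.replicate (K + 1) r).flatten.take r.length = r := by
      simp [List.replicate_succ]
    simp only [List.HasPeriod, htake]
    nth_rw 1 [List.replicate_succ]
    rw [List.flatten_cons, List.prefix_append_right_inj, List.replicate_succ', List.flatten_concat]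
    exact List.prefix_append _ _

theorem getElem?_flatMap_of_length_eq {γ δ : Type*} {F : γ → List δ} {L : ℕ}
    (hF : ∀ c, (F c).length = L) (s : List γ) (k : ℕ) {i : ℕ} (hi : i < L) :
    (s.flatMap F)[L * k + i]? = s[k]?.bind fun c => (F c)[i]? := by
  induction s generalizing k with
  | nil => simp
  | cons c s ih =>
    cases k with
    | zero => simp [List.getElem?_append_left, hF, hi]
    | succ k =>
      rw [List.flatMap_cons, List.getElem?_append_right (by rw [hF]; lia), hF,
        show L * (k + 1) + i - L = L * k + i by lia, ih, List.getElem?_cons_succ]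

section Blocks

variable {α β : Type*} {e f : β → α} {N : ℕ}

/-- The word `xᴺ y xᴺ` with `x = (e b)^ε` and `y = (f b)^ε`, by which the letter `t = b^ε` is
replaced. Later `e` is injective and `f` nowhere agrees with `e`. -/
def block (e f : β → α) (N : ℕ) (t : β × Bool) : List (α × Bool) :=
  List.replicate N (e t.1, t.2) ++ (f t.1, t.2) :: List.replicate N (e t.1, t.2)

theorem length_block (t : β × Bool) : (block e f N t).length = 2 * N + 1 := by
  simp only [block, List.length_append, List.length_cons, List.length_replicate]
  omega

theorem getElem?_block (t : β × Bool) {i : ℕ} (hi : i < 2 * N + 1) :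
    (block e f N t)[i]? = some (if i = N then f t.1 else e t.1, t.2) := by
  simp only [block, List.getElem?_append, List.getElem?_cons, List.getElem?_replicate,
    List.length_replicate]
  grind

theorem length_flatMap_block (s : List (β × Bool)) :
    (s.flatMap (block e f N)).length = (2 * N + 1) * s.length := by
  simp [List.length_flatMap, length_block, mul_comm]

theorem flatMap_block_eq_nil_iff {s : List (β × Bool)} :
    s.flatMap (block e f N) = [] ↔ s = [] := by
  rw [← List.length_eq_zero_iff, length_flatMap_block, Nat.mul_eq_zero, List.length_eq_zero_iff]
  exact or_iff_right (Nat.succ_ne_zero _)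

theorem getElem?_flatMap_block (s : List (β × Bool)) (k : ℕ) {i : ℕ} (hi : i < 2 * N + 1) :
    (s.flatMap (block e f N))[(2 * N + 1) * k + i]? =
      s[k]?.map fun t => (if i = N then f t.1 else e t.1, t.2) := by
  rw [getElem?_flatMap_of_length_eq length_block s k hi]
  simp [getElem?_block _ hi, Option.map_eq_bind]

theorem invRev_flatMap_block (s : List (β × Bool)) :
    invRev (s.flatMap (block e f N)) = (invRev s).flatMap (block e f N) := by
  induction s with
  | nil => rfl
  | cons t s ih =>
    rw [List.flatMap_cons, invRev_append, ih, invRev_cons (L := s), List.flatMap_append]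
    simp [invRev, block]

theorem isReduced_flatMap_block (he : Function.Injective e) (hN : N ≠ 0) {s : List (β × Bool)}
    (hs : IsReduced s) : IsReduced (s.flatMap (block e f N)) := by
  have hblock (t : β × Bool) : IsReduced (block e f N t) := by
    have hsign : ∀ x ∈ block e f N t, x.2 = t.2 := by
      simp only [block, List.mem_append, List.mem_cons, List.mem_replicate]
      rintro x (⟨-, rfl⟩ | rfl | ⟨-, rfl⟩) <;> rfl
    have hpair : (block e f N t).Pairwise fun x y => x.2 = y.2 :=
      List.pairwise_of_forall_mem_list fun x hx y hy => (hsign x hx).trans (hsign y hy).symm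
    exact hpair.isChain.imp fun x y hxy _ => hxy
  have hhead (t : β × Bool) : (block e f N t).head? = some (e t.1, t.2) := by
    simp [block, List.head?_replicate, hN]
  have hlast (t : β × Bool) : (block e f N t).getLast? = some (e t.1, t.2) := by
    simp [block, List.getLast?_cons, List.getLast?_replicate, hN]
  rw [List.flatMap_def, FreeGroup.IsReduced, List.isChain_flatten (by simp [block]),
    List.isChain_map]
  refine ⟨List.forall_mem_map.2 fun t _ => hblock t, hs.imp fun t t' htt' => ?_⟩
  simpa [hhead, hlast, he.eq_iff] using htt'

theorem isCyclicallyReduced_flatMap_block (he : Function.Injective e) (hN : N ≠ 0)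
    {s : List (β × Bool)} (hs : IsCyclicallyReduced s) :
    IsCyclicallyReduced (s.flatMap (block e f N)) := by
  rw [isCyclicallyReduced_iff_isReduced_append_self] at hs ⊢
  simpa only [List.flatMap_append] using isReduced_flatMap_block he hN hs

theorem flatten_replicate_flatMap_block (s : List (β × Bool)) (K : ℕ) :
    (List.replicate K (s.flatMap (block e f N))).flatten =
      (List.replicate K s).flatten.flatMap (block e f N) := by
  induction K with
  | zero => simp
  | succ K ih =>
    simp only [List.replicate_succ, List.flatten_cons, List.flatMap_append, ih]

theorem not_block_infix_flatten_replicate (hef : ∀ b, f b ≠ e b) (t : β × Bool)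
    {r : List (α × Bool)} (hr : r.length ≤ N) (K : ℕ) :
    ¬ block e f N t <:+: (List.replicate K r).flatten := by
  intro h
  have hr0 : r.length ≠ 0 := by
    rintro hr0
    have := h.length_le
    simp [length_block, hr0] at this
  have hper := List.hasPeriod_iff_getElem?.1 ((hasPeriod_flatten_replicate r K).infix h)
    (N - r.length) (by rw [length_block]; lia)
  rw [Nat.sub_add_cancel hr, getElem?_block t (by lia), getElem?_block t (by lia),
    if_neg (by lia), if_pos rfl] at hper
  exact hef t.1 (by simpa using hper.symm)

theorem length_eq_mul_of_append_block_prefix (hef : ∀ b, f b ≠ e b) (hN : 2 ≤ N)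
    {u : List (α × Bool)} {t : β × Bool} {s : List (β × Bool)}
    (h : u ++ block e f N t <+: s.flatMap (block e f N)) :
    ∃ k, u.length = (2 * N + 1) * k := by
  set w := s.flatMap (block e f N)
  have hwindow (i : ℕ) (hi : i < 2 * N + 1) :
      w[u.length + i]? = some (if i = N then f t.1 else e t.1, t.2) := by
    obtain ⟨z, hz⟩ := h
    rw [← hz, List.append_assoc, List.getElem?_append_right (by lia), Nat.add_sub_cancel_left,
      List.getElem?_append_left (by rwa [length_block]), getElem?_block t hi]
  have hprev : w[u.length + (N - 1)]? ≠ w[u.length + N]? := by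
    rw [hwindow _ (by lia), hwindow _ (by lia), if_neg (by lia), if_pos rfl]
    simpa using (hef t.1).symm
  have hnext : w[u.length + N]? ≠ w[u.length + (N + 1)]? := by
    rw [hwindow N (by lia), hwindow (N + 1) (by lia), if_pos rfl, if_neg (by lia)]
    simpa using hef t.1
  have hconst (k i : ℕ) (hi : i < 2 * N) (hiN : i ≠ N) (hiN' : i + 1 ≠ N) :
      w[(2 * N + 1) * k + i]? = w[(2 * N + 1) * k + (i + 1)]? := by
    simp only [w, getElem?_flatMap_block s k (show i < 2 * N + 1 by lia),
      getElem?_flatMap_block s k (show i + 1 < 2 * N + 1 by lia), if_neg hiN, if_neg hiN']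
  obtain ⟨k, i, hi, hk⟩ : ∃ k i, i < 2 * N + 1 ∧ u.length + N = (2 * N + 1) * k + i :=
    ⟨_, _, Nat.mod_lt _ (by lia), (Nat.div_add_mod (u.length + N) (2 * N + 1)).symm⟩
  obtain rfl | hiN := eq_or_ne i N
  · exact ⟨k, by lia⟩
  -- Otherwise the middle letter of the block after `u` has an equal neighbour.
  by_cases hi' : i < 2 * N ∧ i + 1 ≠ N
  · refine absurd ?_ hnext
    rw [← add_assoc, hk]
    exact hconst k i hi'.1 hiN hi'.2
  · refine absurd ?_ hprev
    obtain ⟨i, rfl⟩ := Nat.exists_eq_succ_of_ne_zero (show i ≠ 0 by lia)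
    rw [hk, show u.length + (N - 1) = (2 * N + 1) * k + i by lia]
    exact hconst k i (by lia) (by lia) hiN

theorem exists_eq_flatMap_of_append_block_prefix (hef : ∀ b, f b ≠ e b) (hN : 2 ≤ N)
    {u : List (α × Bool)} {t : β × Bool} {s : List (β × Bool)}
    (h : u ++ block e f N t <+: s.flatMap (block e f N)) :
    ∃ s₁ : List (β × Bool), u = s₁.flatMap (block e f N) := by
  obtain ⟨k, hk⟩ := length_eq_mul_of_append_block_prefix hef hN h
  have hu : u <+: s.flatMap (block e f N) := (List.prefix_append _ _).trans h
  have hks : k ≤ s.length := by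
    have hle := hu.length_le
    rw [hk, length_flatMap_block] at hle
    exact Nat.le_of_mul_le_mul_left hle (by lia)
  have hlen : u.length = ((s.take k).flatMap (block e f N)).length := by
    rw [hk, length_flatMap_block, List.length_take_of_le hks]
  exact ⟨s.take k, (List.prefix_of_prefix_length_le hu ((List.take_prefix k s).flatMap _)
    hlen.le).eq_of_length hlen⟩

/-- The homomorphism replacing each generator by its block. -/
def blockHom (e f : β → α) (N : ℕ) : FreeGroup β →* FreeGroup α :=
  FreeGroup.lift fun b => mk (block e f N (b, true))

theorem blockHom_mk (s : List (β × Bool)) :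
    blockHom e f N (mk s) = mk (s.flatMap (block e f N)) := by
  induction s with
  | nil => exact map_one (blockHom e f N)
  | cons t s ih =>
    have hletter : blockHom e f N (mk [t]) = mk (block e f N t) := by
      obtain ⟨b, ε⟩ := t
      cases ε <;> simp [blockHom, block, inv_mk, invRev]
    rw [List.flatMap_cons, ← mul_mk, ← ih, ← hletter, ← map_mul, mul_mk, List.singleton_append]

theorem blockHom_injective (he : Function.Injective e) (hN : N ≠ 0) :
    Function.Injective (blockHom e f N) := by
  classical
  rw [injective_iff_map_eq_one]
  intro x hx
  rw [← mk_toWord (x := x), blockHom_mk, one_eq_mk] at hx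
  have hnil := eq_of_isReduced_of_mk_eq (isReduced_flatMap_block he hN isReduced_toWord) .nil hx
  exact toWord_eq_nil_iff.1 (flatMap_block_eq_nil_iff.1 hnil)

theorem exists_append_block_prefix_of_conj_eq_zpow (he : Function.Injective e) (hN : N ≠ 0)
    {a : FreeGroup β} (ha : a ≠ 1) {r : List (α × Bool)} (hr : IsCyclicallyReduced r)
    {g : FreeGroup α} {j : ℤ} (h : g * blockHom e f N a * g⁻¹ = mk r ^ j) :
    ∃ (c : FreeGroup β) (u : List (α × Bool)) (t : β × Bool),
      mk u = g * blockHom e f N c ∧ ∃ r' ∈ ({r, invRev r} : Set (List (α × Bool))),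
        ∃ K, u ++ block e f N t <+: (List.replicate K r').flatten := by
  classical
  obtain ⟨c, s, hs, -, rfl⟩ := exists_isCyclicallyReduced_conj a
  have hs0 : s ≠ [] := by
    rintro rfl
    simp [← one_eq_mk] at ha
  obtain ⟨u, hured, hu⟩ : ∃ u, IsReduced u ∧ mk u = g * blockHom e f N c :=
    ⟨_, isReduced_toWord, mk_toWord⟩
  have hconj : mk u * mk (s.flatMap (block e f N)) * (mk u)⁻¹ = mk r ^ j := by
    rw [hu, ← blockHom_mk, ← h]
    simp only [map_mul, map_inv, mul_inv_rev, mul_assoc]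
  obtain ⟨p, hp, r', hr', K, hK⟩ := exists_append_prefix_flatten_replicate_of_conj_eq_zpow
    hured (isCyclicallyReduced_flatMap_block he hN hs) (mt flatMap_block_eq_nil_iff.1 hs0) hr hconj
  obtain ⟨t, s', rfl⟩ : ∃ t s', p = block e f N t ++ s' := by
    obtain ⟨s', hs', rfl⟩ : ∃ s' : List (β × Bool), s' ≠ [] ∧ p = s'.flatMap (block e f N) := by
      obtain rfl | rfl := hp
      · exact ⟨s, hs0, rfl⟩
      · exact ⟨invRev s, by simpa [invRev] using hs0, invRev_flatMap_block s⟩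
    obtain ⟨t, s', rfl⟩ := List.exists_cons_of_ne_nil hs'
    exact ⟨t, s'.flatMap (block e f N), List.flatMap_cons⟩
  refine ⟨c, u, t, hu, r', hr', K, List.IsPrefix.trans ?_ hK⟩
  rw [← List.append_assoc]
  exact List.prefix_append _ _

theorem isMalnormal_range_blockHom (he : Function.Injective e) (hef : ∀ b, f b ≠ e b)
    (hN : 2 ≤ N) : IsMalnormal (blockHom e f N).range := by
  classical
  intro g hg
  rw [Ne, conjSubgroup_range_inf_eq_bot_iff] at hg
  push Not at hg
  obtain ⟨a, ⟨b, hb⟩, ha⟩ := hg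
  obtain ⟨z, s, hs, -, rfl⟩ := exists_isCyclicallyReduced_conj b
  have hconj : (blockHom e f N z)⁻¹ * g * blockHom e f N a * ((blockHom e f N z)⁻¹ * g)⁻¹ =
      mk (s.flatMap (block e f N)) ^ (1 : ℤ) := by
    rw [← blockHom_mk, zpow_one]
    calc _ = (blockHom e f N z)⁻¹ * (g * blockHom e f N a * g⁻¹) * blockHom e f N z := by group
      _ = _ := by rw [← hb, map_mul, map_mul, map_inv]; group
  obtain ⟨c, u, t, hu, r', hr', K, hK⟩ := exists_append_block_prefix_of_conj_eq_zpow he (by lia)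
    (by rintro rfl; simp at ha) (isCyclicallyReduced_flatMap_block he (by lia) hs) hconj
  obtain ⟨s', rfl⟩ : ∃ s' : List (β × Bool), r' = s'.flatMap (block e f N) := by
    obtain rfl | rfl := hr'
    exacts [⟨s, rfl⟩, ⟨invRev s, invRev_flatMap_block s⟩]
  rw [flatten_replicate_flatMap_block] at hK
  obtain ⟨s₁, rfl⟩ := exists_eq_flatMap_of_append_block_prefix hef hN hK
  refine ⟨z * mk s₁ * c⁻¹, ?_⟩
  rw [map_mul, map_mul, blockHom_mk, hu]
  simp only [map_inv, mul_assoc, mul_inv_cancel, mul_one, mul_inv_cancel_left]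

theorem conjSubgroup_range_blockHom_inf_zpowers_eq_bot [DecidableEq α]
    (he : Function.Injective e) (hef : ∀ b, f b ≠ e b) (hN : N ≠ 0) {h : FreeGroup α}
    (hh : h.norm ≤ N) (g : FreeGroup α) :
    conjSubgroup g (blockHom e f N).range ⊓ Subgroup.zpowers h = ⊥ := by
  rw [conjSubgroup_range_inf_eq_bot_iff]
  rintro a ⟨j, hj⟩
  by_contra! ha
  obtain ⟨z, r, hr, hrlen, rfl⟩ := exists_isCyclicallyReduced_conj h
  have hconj : z⁻¹ * g * blockHom e f N a * (z⁻¹ * g)⁻¹ = mk r ^ j := by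
    calc _ = z⁻¹ * (g * blockHom e f N a * g⁻¹) * z := by group
      _ = _ := by rw [← hj]; simp only [conj_zpow]; group
  obtain ⟨c, u, t, -, r', hr', K, hK⟩ := exists_append_block_prefix_of_conj_eq_zpow he hN
    (by rintro rfl; simp at ha) hr hconj
  have hr'len : r'.length ≤ N := by
    obtain rfl | rfl := hr'
    exacts [hrlen.trans hh, invRev_length.trans_le (hrlen.trans hh)]
  exact not_block_infix_flatten_replicate hef t hr'len K
    ((List.suffix_append _ _).isInfix.trans hK.isInfix)

end Blocks

theorem claim_separating_cyclics_general {α β : Type*} [DecidableEq α] [Nontrivial α] (e : β ↪ α)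
    (N : ℕ) :
    ∃ J : Subgroup (FreeGroup α),
      (∃ ψ : FreeGroup β →* FreeGroup α, Function.Injective ψ ∧ ψ.range = J) ∧
      IsMalnormal J ∧
      ∀ h : FreeGroup α, h.norm ≤ N → ∀ g : FreeGroup α,
        conjSubgroup g J ⊓ Subgroup.zpowers h = ⊥ := by
  choose f hf using fun b => exists_ne (e b)
  exact ⟨(blockHom e f (N + 2)).range,
    ⟨_, blockHom_injective e.injective (by lia), rfl⟩,
    isMalnormal_range_blockHom e.injective hf (by lia),
    fun h hh => conjSubgroup_range_blockHom_inf_zpowers_eq_bot e.injective hf (by lia) (by lia)⟩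

/-- Claim 3.10: given finitely many nontrivial elements `h i` of a free group `F` of
rank `n ≥ 2`, there is a rank-2 free subgroup `J ≤ F` that is malnormal and such that
every conjugate of `J` meets each cyclic subgroup `⟨h i⟩` trivially. -/
theorem claim_separating_cyclics (n k : ℕ) (hn : 2 ≤ n)
    (h : Fin k → FreeGroup (Fin n)) (hh : ∀ i, h i ≠ 1) :
    ∃ J : Subgroup (FreeGroup (Fin n)),
      (∃ ψ : FreeGroup (Fin 2) →* FreeGroup (Fin n),
        Function.Injective ψ ∧ ψ.range = J) ∧
      IsMalnormal J ∧
      ∀ (i : Fin k) (g : FreeGroup (Fin n)),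
        conjSubgroup g J ⊓ Subgroup.zpowers (h i) = ⊥ := by
  have := Fin.nontrivial_iff_two_le.mpr hn
  obtain ⟨J, hfree, hmal, hJ⟩ :=
    claim_separating_cyclics_general (Fin.castLEEmb hn) (∑ i, (h i).norm)
  exact ⟨J, hfree, hmal, fun i =>
    hJ (h i) (Finset.single_le_sum (f := fun i => (h i).norm) (by simp) (Finset.mem_univ i))⟩
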